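/- Let d = 2 and let α be real with 5/6 < α < 1. Then there exists a constant C > 0 such that for every u ∈ ℝ², ∫_{(ℝ²)³} ‖u + q₁ + q₂ − q₁′‖^{-1} ⟨q₁⟩^{-2α} ⟨q₂⟩^{-2α} ⟨q₁′⟩^{-2α} dq₁ dq₂ dq₁′ ≤ C. -/

import Mathlib

/-!
Young's inequality for four functions with exponents `1 / pᵢ`, `∑ pᵢ = 3`, bounds the integral
uniformly in `u` by the product of the norms of `k` and of the three brackets. The kernel
`k = ‖·‖^(-s)` lies in no single Lebesgue space, so it is cut at the unit sphere: the inner part is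
integrable and pairs with brackets in `L^(3/2)`, the outer part lies in `L^(1 / (3θ))` and pairs
with brackets in `L^(1 / (1 - θ))`, where `1 - 2α / d < θ < s / (3d)`. Such a positive `θ` exists
exactly when `d < 2α + s / 3`; for `d = 2` and `s = 1` this is `5/6 < α`.

Young's inequality in turn is Hölder's inequality for the four products in which one function is
left out: the integral of each of these splits by a translation or reflection of one variable.
-/

open MeasureTheory

/-- The Japanese bracket `⟨x⟩ = (1 + ‖x‖²)^{1/2}` on `ℝ^d`. -/
noncomputable def jap {d : ℕ} (x : EuclideanSpace ℝ (Fin d)) : ℝ :=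
  (1 + ‖x‖ ^ 2) ^ ((1 : ℝ) / 2)

open Finset in
lemma prod_prod_erase_rpow {ι : Type*} [Fintype ι] [DecidableEq ι] {p : ι → ℝ}
    (hp : ∀ i, p i ≤ 1) (hsum : ∑ i, p i + 1 = Fintype.card ι) (a : ι → ENNReal) :
    ∏ i, (∏ j ∈ univ.erase i, a j) ^ (1 - p i) = ∏ j, a j ^ p j := by
  have rpow_sum (j : ι) (s : Finset ι) :
      ∏ i ∈ s, a j ^ (1 - p i) = a j ^ ∑ i ∈ s, (1 - p i) := by
    induction s using Finset.induction_on with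
    | empty => simp
    | insert i s hi ih =>
      rw [prod_insert hi, sum_insert hi, ih, ENNReal.rpow_add_of_nonneg _ _
        (sub_nonneg.2 (hp i)) (sum_nonneg fun k _ => sub_nonneg.2 (hp k))]
  have sum_erase (j : ι) : ∑ i ∈ univ.erase j, (1 - p i) = p j := by
    rw [sum_erase_eq_sub (mem_univ j), sum_sub_distrib]
    simp only [sum_const, card_univ, nsmul_eq_mul, mul_one]
    linarith
  calc ∏ i, (∏ j ∈ univ.erase i, a j) ^ (1 - p i)
      = ∏ i, ∏ j ∈ univ.erase i, a j ^ (1 - p i) :=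
        prod_congr rfl fun i _ => (ENNReal.prod_rpow_of_nonneg (sub_nonneg.2 (hp i))).symm
    _ = ∏ j, ∏ i ∈ univ.erase j, a j ^ (1 - p i) :=
        prod_comm' fun i j => by simp [ne_comm]
    _ = ∏ j, a j ^ p j := by simp_rw [rpow_sum, sum_erase]

open Finset in
theorem lintegral_prod_rpow_le_of_prod_erase {Ω ι : Type*} [MeasurableSpace Ω] {μ : Measure Ω}
    [Fintype ι] [DecidableEq ι] {g : ι → Ω → ENNReal} (hg : ∀ i, AEMeasurable (g i) μ)
    {p : ι → ℝ} (hp : ∀ i, p i ≤ 1) (hsum : ∑ i, p i + 1 = Fintype.card ι) {A : ι → ENNReal}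
    (hA : ∀ i, ∫⁻ ω, ∏ j ∈ univ.erase i, g j ω ∂μ ≤ ∏ j ∈ univ.erase i, A j) :
    ∫⁻ ω, ∏ i, g i ω ^ p i ∂μ ≤ ∏ i, A i ^ p i := by
  have weights_sum : ∑ i, (1 - p i) = 1 := by
    rw [sum_sub_distrib]
    simp only [sum_const, card_univ, nsmul_eq_mul, mul_one]
    linarith
  calc ∫⁻ ω, ∏ i, g i ω ^ p i ∂μ
      = ∫⁻ ω, ∏ i, (∏ j ∈ univ.erase i, g j ω) ^ (1 - p i) ∂μ := by
        simp_rw [prod_prod_erase_rpow hp hsum]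
    _ ≤ ∏ i, (∫⁻ ω, ∏ j ∈ univ.erase i, g j ω ∂μ) ^ (1 - p i) :=
        ENNReal.lintegral_prod_norm_pow_le univ
          (fun i _ => Finset.aemeasurable_fun_prod _ fun j _ => hg j) weights_sum
          fun i _ => sub_nonneg.2 (hp i)
    _ ≤ ∏ i, (∏ j ∈ univ.erase i, A j) ^ (1 - p i) :=
        prod_le_prod' fun i _ => ENNReal.rpow_le_rpow (hA i) (sub_nonneg.2 (hp i))
    _ = ∏ i, A i ^ p i := prod_prod_erase_rpow hp hsum A

section Tonelli

variable {X Y : Type*} [MeasurableSpace X] [MeasurableSpace Y] {μ : Measure X} {ν : Measure Y}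
  [SFinite ν] {H : X × Y → ENNReal} {A : ENNReal}

lemma lintegral_prod_fst_mul_of_forall_lintegral_eq {h : X → ENNReal} (hh : Measurable h)
    (hH : Measurable H) (hA : ∀ x, ∫⁻ y, H (x, y) ∂ν = A) :
    ∫⁻ z, h z.1 * H z ∂μ.prod ν = (∫⁻ x, h x ∂μ) * A := by
  rw [lintegral_prod _ (by fun_prop), ← lintegral_mul_const _ hh]
  refine lintegral_congr fun x => ?_
  rw [← hA x]
  exact lintegral_const_mul (h x) (hH.comp measurable_prodMk_left)

lemma lintegral_prod_snd_mul_of_forall_lintegral_eq [SFinite μ] {h : Y → ENNReal}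
    (hh : Measurable h) (hH : Measurable H) (hA : ∀ y, ∫⁻ x, H (x, y) ∂μ = A) :
    ∫⁻ z, h z.2 * H z ∂μ.prod ν = (∫⁻ y, h y ∂ν) * A := by
  rw [← lintegral_prod_swap]
  exact lintegral_prod_fst_mul_of_forall_lintegral_eq hh (hH.comp measurable_swap) hA

end Tonelli

section Young

variable {G : Type*} [AddCommGroup G]

/-- The four arguments `u + q₁ + q₂ - q₁'`, `q₁`, `q₂`, `q₁'` of the integrand, indexed by `Fin 4`
so that the kernel and the three weights are treated alike; `q = (q₁, q₂, q₁')`. -/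
def momentum (u : G) (q : G × G × G) : Fin 4 → G :=
  ![u + q.1 + q.2.1 - q.2.2, q.1, q.2.1, q.2.2]

variable [MeasurableSpace G]

/-- The integral of the theorem for a kernel `k` and a common weight `f`:
`∫ k (u + q₁ + q₂ - q₁') f(q₁) f(q₂) f(q₁') dq₁ dq₂ dq₁'`. -/
noncomputable def quinticIntegral (μ : Measure G) (k f : G → ENNReal) (u : G) : ENNReal :=
  ∫⁻ q : G × G × G, k (u + q.1 + q.2.1 - q.2.2) * (f q.1 * f q.2.1 * f q.2.2) ∂μ.prod (μ.prod μ)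

variable [MeasurableAdd₂ G] {μ : Measure G}

lemma lintegral_add_add_sub_eq_self [μ.IsAddLeftInvariant] (k : G → ENNReal) (u y z : G) :
    ∫⁻ x, k (u + x + y - z) ∂μ = ∫⁻ x, k x ∂μ := by
  have key (x : G) : u + x + y - z = (u + y - z) + x := by abel
  simp_rw [key]
  exact lintegral_add_left_eq_self k _

variable [MeasurableNeg G]

lemma measurable_momentum (u : G) (i : Fin 4) : Measurable fun q => momentum u q i := by
  fin_cases i <;> dsimp [momentum] <;> fun_prop

lemma quinticIntegral_add {k l f : G → ENNReal} (hk : Measurable k) (hf : Measurable f) (u : G) :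
    quinticIntegral μ (k + l) f u = quinticIntegral μ k f u + quinticIntegral μ l f u := by
  simp only [quinticIntegral, Pi.add_apply, add_mul]
  exact lintegral_add_left (by fun_prop) _

variable [SFinite μ] [μ.IsAddLeftInvariant]

lemma lintegral_prod_snd_mul_comp_add_sub {f k : G → ENNReal} (hf : Measurable f)
    (hk : Measurable k) (u : G) :
    ∫⁻ p, f p.2 * k (u + p.1 - p.2) ∂μ.prod μ = (∫⁻ x, f x ∂μ) * ∫⁻ x, k x ∂μ :=
  lintegral_prod_snd_mul_of_forall_lintegral_eq (H := fun p => k (u + p.1 - p.2)) hf (by fun_prop)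
    fun y => by simpa using lintegral_add_add_sub_eq_self k u 0 y

variable [μ.IsNegInvariant]

lemma lintegral_prod_fst_mul_comp_add_sub {f k : G → ENNReal} (hf : Measurable f)
    (hk : Measurable k) (u : G) :
    ∫⁻ p, f p.1 * k (u + p.1 - p.2) ∂μ.prod μ = (∫⁻ x, f x ∂μ) * ∫⁻ x, k x ∂μ :=
  lintegral_prod_fst_mul_of_forall_lintegral_eq (H := fun p => k (u + p.1 - p.2)) hf (by fun_prop)
    fun x => lintegral_sub_left_eq_self k (u + x)

open Finset in
lemma lintegral_prod_erase_momentum {F : Fin 4 → G → ENNReal} (hF : ∀ i, Measurable (F i)) (u : G)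
    (i : Fin 4) :
    ∫⁻ q, ∏ j ∈ univ.erase i, F j (momentum u q j) ∂μ.prod (μ.prod μ) =
      ∏ j ∈ univ.erase i, ∫⁻ x, F j x ∂μ := by
  have integral_two (i j : Fin 4) : ∫⁻ p : G × G, F i p.1 * F j p.2 ∂μ.prod μ =
      (∫⁻ x, F i x ∂μ) * ∫⁻ x, F j x ∂μ :=
    lintegral_prod_mul (hF i).aemeasurable (hF j).aemeasurable
  fin_cases i
  · have others : univ.erase (0 : Fin 4) = {1, 2, 3} := by decide
    simpa [others, momentum] using
      lintegral_prod_fst_mul_of_forall_lintegral_eq (hF 1)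
        (H := fun q : G × G × G => F 2 q.2.1 * F 3 q.2.2) (by fun_prop) fun _ => integral_two 2 3
  · have others : univ.erase (1 : Fin 4) = {2, 3, 0} := by decide
    simpa [others, momentum, integral_two, mul_assoc] using
      lintegral_prod_snd_mul_of_forall_lintegral_eq (μ := μ) (ν := μ.prod μ)
        (h := fun p => F 2 p.1 * F 3 p.2) (H := fun q => F 0 (u + q.1 + q.2.1 - q.2.2))
        (by fun_prop) (by fun_prop) fun p => lintegral_add_add_sub_eq_self (F 0) u p.1 p.2
  · have others : univ.erase (2 : Fin 4) = {1, 3, 0} := by decide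
    simpa [others, momentum] using
      lintegral_prod_fst_mul_of_forall_lintegral_eq (hF 1)
        (H := fun q : G × G × G => F 3 q.2.2 * F 0 (u + q.1 + q.2.1 - q.2.2)) (by fun_prop)
        fun x => lintegral_prod_snd_mul_comp_add_sub (hF 3) (hF 0) (u + x)
  · have others : univ.erase (3 : Fin 4) = {1, 2, 0} := by decide
    simpa [others, momentum] using
      lintegral_prod_fst_mul_of_forall_lintegral_eq (hF 1)
        (H := fun q : G × G × G => F 2 q.2.1 * F 0 (u + q.1 + q.2.1 - q.2.2)) (by fun_prop)
        fun x => lintegral_prod_fst_mul_comp_add_sub (hF 2) (hF 0) (u + x)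

theorem lintegral_prod_momentum_le {F : Fin 4 → G → ENNReal} (hF : ∀ i, Measurable (F i))
    {p : Fin 4 → ℝ} (hp_pos : ∀ i, 0 < p i) (hp : ∀ i, p i ≤ 1) (hsum : ∑ i, p i = 3) (u : G) :
    ∫⁻ q, ∏ i, F i (momentum u q i) ∂μ.prod (μ.prod μ) ≤
      ∏ i, (∫⁻ x, F i x ^ (p i)⁻¹ ∂μ) ^ p i := by
  have hFp (i : Fin 4) : Measurable fun x => F i x ^ (p i)⁻¹ := (hF i).pow_const _
  have young := lintegral_prod_rpow_le_of_prod_erase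
    (g := fun i q => F i (momentum u q i) ^ (p i)⁻¹) (μ := μ.prod (μ.prod μ))
    (fun i => ((hFp i).comp (measurable_momentum u i)).aemeasurable) hp (by norm_num [hsum])
    fun i => (lintegral_prod_erase_momentum hFp u i).le
  simpa only [ENNReal.rpow_inv_rpow (hp_pos _).ne'] using young

lemma iSup_quinticIntegral_lt_top {k f : G → ENNReal} (hk : Measurable k) (hf : Measurable f)
    {θ : ℝ} (hθ_pos : 0 < θ) (hθ : θ ≤ 1 / 3) (hk_int : ∫⁻ x, k x ^ (3 * θ)⁻¹ ∂μ ≠ ⊤)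
    (hf_int : ∫⁻ x, f x ^ (1 - θ)⁻¹ ∂μ ≠ ⊤) :
    ⨆ u, quinticIntegral μ k f u < ⊤ := by
  let F : Fin 4 → G → ENNReal := ![k, f, f, f]
  let p : Fin 4 → ℝ := ![3 * θ, 1 - θ, 1 - θ, 1 - θ]
  have hF : ∀ i, Measurable (F i) := by simp [F, Fin.forall_fin_succ, hk, hf]
  have hp_pos : ∀ i, 0 < p i := by
    simpa [p, Fin.forall_fin_succ, hθ_pos] using (by linarith : θ < 1)
  have hp : ∀ i, p i ≤ 1 := by
    simpa [p, Fin.forall_fin_succ, hθ_pos.le] using (by linarith : 3 * θ ≤ 1)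
  have hsum : ∑ i, p i = 3 := by
    simp only [p, Fin.sum_univ_four, Matrix.cons_val]
    ring
  have hF_int : ∀ i, ∫⁻ x, F i x ^ (p i)⁻¹ ∂μ ≠ ⊤ := by
    simpa [F, p, Fin.forall_fin_succ] using And.intro hk_int hf_int
  have norms_lt_top : ∏ i, (∫⁻ x, F i x ^ (p i)⁻¹ ∂μ) ^ p i < ⊤ :=
    ENNReal.prod_lt_top fun i _ => ENNReal.rpow_lt_top_of_nonneg (hp_pos i).le (hF_int i)
  refine (iSup_le fun u => ?_).trans_lt norms_lt_top
  simpa [quinticIntegral, F, momentum, Fin.prod_univ_four, mul_assoc] using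
    lintegral_prod_momentum_le hF hp_pos hp hsum u

end Young

section Power

variable {E : Type*} [NormedAddCommGroup E] [MeasurableSpace E] {μ : Measure E} {s : ℝ}

lemma lintegral_indicator_norm_rpow_neg_rpow {S : Set E} (hS : MeasurableSet S) {t : ℝ}
    (ht : 0 < t) :
    ∫⁻ x, S.indicator (fun x => ENNReal.ofReal (‖x‖ ^ (-s))) x ^ t ∂μ =
      ∫⁻ x in S, ENNReal.ofReal (‖x‖ ^ (-(s * t))) ∂μ := by
  rw [← lintegral_indicator hS]
  refine lintegral_congr fun x => ?_
  by_cases hx : x ∈ S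
  · rw [Set.indicator_of_mem hx, Set.indicator_of_mem hx,
      ENNReal.ofReal_rpow_of_nonneg (by positivity) ht.le, ← Real.rpow_mul (norm_nonneg x), neg_mul]
  · rw [Set.indicator_of_notMem hx, Set.indicator_of_notMem hx, ENNReal.zero_rpow_of_pos ht]

variable [NormedSpace ℝ E] [FiniteDimensional ℝ E] [BorelSpace E] [μ.IsAddHaarMeasure]

open Module Metric

lemma integrableOn_ball_norm_rpow_neg [Nontrivial E] (hs : s < finrank ℝ E) :
    IntegrableOn (fun x : E => ‖x‖ ^ (-s)) (ball 0 1) μ :=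
  integrableOn_ball_of_norm_le_rpow (C := 1) finrank_pos hs
    (.of_forall fun x => by simp [Real.abs_rpow_of_nonneg])
    (by fun_prop : Measurable _).aestronglyMeasurable

lemma integrableOn_compl_ball_norm_rpow_neg (hs : finrank ℝ E < s) :
    IntegrableOn (fun x : E => ‖x‖ ^ (-s)) (ball 0 1)ᶜ μ := by
  have hs_pos : 0 < s := (Nat.cast_nonneg _).trans_lt hs
  refine ((integrable_one_add_norm hs).const_mul (2 ^ s)).integrableOn.mono'
    (by fun_prop : Measurable _).aestronglyMeasurable ?_
  refine (ae_restrict_iff' measurableSet_ball.compl).2 (.of_forall fun x hx => ?_)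
  have one_le_norm : 1 ≤ ‖x‖ := by simpa using hx
  calc ‖‖x‖ ^ (-s)‖ = ‖x‖ ^ (-s) := Real.norm_of_nonneg (by positivity)
    _ ≤ ((1 + ‖x‖) / 2) ^ (-s) :=
      Real.rpow_le_rpow_of_nonpos (by positivity) (by linarith) (neg_nonpos.2 hs_pos.le)
    _ = 2 ^ s * (1 + ‖x‖) ^ (-s) := by
      rw [Real.div_rpow (by positivity) zero_le_two, Real.rpow_neg zero_le_two, div_inv_eq_mul,
        mul_comm]

end Power

lemma exists_young_exponent {d s r : ℝ} (hs_pos : 0 < s) (hs : s < d) (hr : d < r + s / 3) :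
    ∃ θ, 0 < θ ∧ θ ≤ 1 / 3 ∧ d * (1 - θ) < r ∧ d < s * (3 * θ)⁻¹ := by
  have hd : 0 < d := hs_pos.trans hs
  obtain ⟨θ, hθ_lower, hθ_upper⟩ : ∃ θ, max 0 (1 - r / d) < θ ∧ θ < s / (3 * d) := by
    refine exists_between (max_lt (by positivity) ?_)
    field_simp
    linarith
  obtain ⟨hθ_pos, hθ_bracket⟩ := max_lt_iff.1 hθ_lower
  rw [sub_lt_comm, lt_div_iff₀ hd] at hθ_bracket
  rw [lt_div_iff₀ (by positivity)] at hθ_upper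
  refine ⟨θ, hθ_pos, by nlinarith, by linarith, ?_⟩
  rw [← div_eq_mul_inv, lt_div_iff₀ (by positivity)]
  linarith

section Bracket

variable {d : ℕ}

lemma jap_pos (x : EuclideanSpace ℝ (Fin d)) : 0 < jap x := by
  unfold jap
  positivity

@[fun_prop]
lemma measurable_jap : Measurable (jap : EuclideanSpace ℝ (Fin d) → ℝ) := by
  unfold jap
  fun_prop

lemma integrable_jap_rpow_neg {r : ℝ} (hr : d < r) :
    Integrable fun x : EuclideanSpace ℝ (Fin d) => jap x ^ (-r) := by
  have bracket_rpow (x : EuclideanSpace ℝ (Fin d)) : jap x ^ (-r) = (1 + ‖x‖ ^ 2) ^ (-r / 2) := by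
    rw [jap, ← Real.rpow_mul (by positivity)]
    ring_nf
  simp_rw [bracket_rpow]
  exact integrable_rpow_neg_one_add_norm_sq (by simpa using hr)

lemma lintegral_jap_rpow_neg_rpow_lt_top {r t : ℝ} (hrt : d < r * t) :
    ∫⁻ x : EuclideanSpace ℝ (Fin d), ENNReal.ofReal (jap x ^ (-r)) ^ t < ⊤ := by
  have bracket_rpow (x : EuclideanSpace ℝ (Fin d)) :
      ENNReal.ofReal (jap x ^ (-r)) ^ t = ENNReal.ofReal (jap x ^ (-(r * t))) := by
    rw [ENNReal.ofReal_rpow_of_pos (Real.rpow_pos_of_pos (jap_pos x) _),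
      ← Real.rpow_mul (jap_pos x).le, neg_mul]
  simp_rw [bracket_rpow]
  exact (integrable_jap_rpow_neg hrt).lintegral_lt_top

lemma iSup_quinticIntegral_indicator_lt_top {S : Set (EuclideanSpace ℝ (Fin d))}
    (hS : MeasurableSet S) {s r θ : ℝ} (hθ_pos : 0 < θ) (hθ : θ ≤ 1 / 3)
    (hker : IntegrableOn (fun x : EuclideanSpace ℝ (Fin d) => ‖x‖ ^ (-(s * (3 * θ)⁻¹))) S)
    (hr : d * (1 - θ) < r) :
    ⨆ u, quinticIntegral volume (S.indicator fun x => ENNReal.ofReal (‖x‖ ^ (-s)))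
      (fun x => ENNReal.ofReal (jap x ^ (-r))) u < ⊤ := by
  refine iSup_quinticIntegral_lt_top (.indicator (by fun_prop) hS) (by fun_prop) hθ_pos hθ ?_ ?_
  · rw [lintegral_indicator_norm_rpow_neg_rpow hS (by positivity)]
    exact hker.lintegral_lt_top.ne
  · refine (lintegral_jap_rpow_neg_rpow_lt_top ?_).ne
    rwa [← div_eq_mul_inv, lt_div_iff₀ (by linarith)]

theorem iSup_quinticIntegral_norm_rpow_jap_lt_top {s r : ℝ} (hs_pos : 0 < s) (hs : s < d)
    (hr : d < r + s / 3) :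
    ⨆ u : EuclideanSpace ℝ (Fin d), quinticIntegral volume (fun x => ENNReal.ofReal (‖x‖ ^ (-s)))
      (fun x => ENNReal.ofReal (jap x ^ (-r))) u < ⊤ := by
  let B : Set (EuclideanSpace ℝ (Fin d)) := Metric.ball 0 1
  let k : EuclideanSpace ℝ (Fin d) → ENNReal := fun x => ENNReal.ofReal (‖x‖ ^ (-s))
  let f : EuclideanSpace ℝ (Fin d) → ENNReal := fun x => ENNReal.ofReal (jap x ^ (-r))
  have hB : MeasurableSet B := measurableSet_ball
  have : Nontrivial (EuclideanSpace ℝ (Fin d)) :=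
    Module.nontrivial_of_finrank_pos (R := ℝ) (by simpa using hs_pos.trans hs)
  obtain ⟨θ, hθ_pos, hθ, hθ_bracket, hθ_kernel⟩ := exists_young_exponent hs_pos hs hr
  have inner : ⨆ u, quinticIntegral volume (B.indicator k) f u < ⊤ :=
    iSup_quinticIntegral_indicator_lt_top hB (θ := 1 / 3) (by norm_num) le_rfl
      (integrableOn_ball_norm_rpow_neg (by simpa using hs)) (by linarith)
  have outer : ⨆ u, quinticIntegral volume (Bᶜ.indicator k) f u < ⊤ :=
    iSup_quinticIntegral_indicator_lt_top hB.compl hθ_pos hθ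
      (integrableOn_compl_ball_norm_rpow_neg (by simpa using hθ_kernel)) hθ_bracket
  have split (u : EuclideanSpace ℝ (Fin d)) : quinticIntegral volume k f u =
      quinticIntegral volume (B.indicator k) f u + quinticIntegral volume (Bᶜ.indicator k) f u := by
    rw [← quinticIntegral_add (.indicator (by fun_prop) hB) (by fun_prop),
      Set.indicator_self_add_compl]
  refine (iSup_le fun u => ?_).trans_lt (ENNReal.add_lt_top.2 ⟨inner, outer⟩)
  exact (split u).trans_le (add_le_add (le_iSup _ u) (le_iSup _ u))

end Bracket

theorem statement7_general {d : ℕ} {s α : ℝ} (hs_pos : 0 < s) (hs : s < d)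
    (hα : d < 2 * α + s / 3) :
    ∃ C : ℝ, 0 < C ∧ ∀ u : EuclideanSpace ℝ (Fin d),
      ∫⁻ q : EuclideanSpace ℝ (Fin d) × EuclideanSpace ℝ (Fin d) × EuclideanSpace ℝ (Fin d),
          ENNReal.ofReal (‖u + q.1 + q.2.1 - q.2.2‖ ^ (-s) *
            (jap q.1 ^ (-(2 * α)) * jap q.2.1 ^ (-(2 * α)) * jap q.2.2 ^ (-(2 * α))))
        ≤ ENNReal.ofReal C := by
  have bounded := iSup_quinticIntegral_norm_rpow_jap_lt_top hs_pos hs hα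
  obtain ⟨C, hC⟩ := ENNReal.lt_iff_exists_nnreal_btwn.1 bounded
  have weight_nonneg (x : EuclideanSpace ℝ (Fin d)) : 0 ≤ jap x ^ (-(2 * α)) :=
    Real.rpow_nonneg (jap_pos x).le _
  refine ⟨C, NNReal.coe_pos.2 (by simpa using hC.1.pos), fun u => ?_⟩
  rw [ENNReal.ofReal_coe_nnreal]
  refine le_trans (le_of_eq ?_) ((le_iSup _ u).trans hC.1.le)
  simp [quinticIntegral, ENNReal.ofReal_mul, weight_nonneg, mul_nonneg, Real.rpow_nonneg,
    Measure.volume_eq_prod]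

/-- For `d = 2` and `5/6 < α < 1` there is `C > 0` such that for every `u ∈ ℝ²`,
`∫_{(ℝ²)³} ‖u + q₁ + q₂ − q₁′‖⁻¹ ⟨q₁⟩^{-2α} ⟨q₂⟩^{-2α} ⟨q₁′⟩^{-2α} dq₁ dq₂ dq₁′ ≤ C`. -/
theorem statement7 (α : ℝ) (h1 : 5 / 6 < α) (h2 : α < 1) :
    ∃ C : ℝ, 0 < C ∧ ∀ u : EuclideanSpace ℝ (Fin 2),
      ∫⁻ q : EuclideanSpace ℝ (Fin 2) × EuclideanSpace ℝ (Fin 2) × EuclideanSpace ℝ (Fin 2),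
          ENNReal.ofReal (‖u + q.1 + q.2.1 - q.2.2‖⁻¹ *
            (jap q.1 ^ (-(2 * α)) * jap q.2.1 ^ (-(2 * α)) * jap q.2.2 ^ (-(2 * α))))
        ≤ ENNReal.ofReal C := by
  have bounded := statement7_general (d := 2) (s := 1) (α := α) (by norm_num) (by norm_num)
    (by norm_num; linarith)
  simpa only [Real.rpow_neg_one] using bounded
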